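/- Let k ≥ 1 and let φ = ∃X.∀Y.ψ be a quantified Boolean formula where X = {x₁,…,xₙ} and Y = {y₁,…,y_m} are disjoint sets of variables and ψ = δ₁ ∨ … ∨ δ_u is a 3DNF formula whose ℓ-th term is δ_ℓ = l^ℓ₁ ∧ l^ℓ₂ ∧ l^ℓ₃. Let τ be the relational vocabulary with unary relation symbols D, X̂, Ŷ and binary relation symbols C₁, C₂, C₃, O, and let 𝔄 be the finite τ-structure with domain A = X ∪ Y ∪ {δ₁,…,δ_u} ∪ {⋆} (all these elements pairwise distinct), where D^𝔄 = {δ₁,…,δ_u}, X̂^𝔄 = X, Ŷ^𝔄 = Y ∪ {⋆}, O^𝔄 = {(δ_ℓ, δ_{ℓ′}) : 1 ≤ ℓ < ℓ′ ≤ u}, and for each d ∈ {1,2,3}, C_d^𝔄 = {(δ_ℓ, z) : 1 ≤ ℓ ≤ u and z ∈ X ∪ Y is the variable occurring in the literal l^ℓ_d}. Let φ′ be the first-order τ-sentence ∃u₁…u_k ∀v₁…v_m ∀w₁…w_u [χ_U ∧ ((χ_V ∧ χ_W) → χ_sat)], where χ_U = ⋀_{1≤i≤k} X̂(u_i) ∧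 ⋀_{1≤i<i′≤k} (u_i ≠ u_{i′}); χ_V = ⋀_{1≤i≤m} Ŷ(v_i); χ_W = ⋀_{1≤ℓ≤u} D(w_ℓ) ∧ ⋀_{1≤ℓ<ℓ′≤u} O(w_ℓ, w_{ℓ′}); and χ_sat = ⋁_{1≤ℓ≤u} ⋀_{d=1}^{3} χ^{ℓ,d}, with χ^{ℓ,d} = ⋁_{1≤j≤k} C_d(w_ℓ, u_j) if l^ℓ_d is a positive literal on a variable of X, χ^{ℓ,d} = ⋀_{1≤j≤k} ¬C_d(w_ℓ, u_j) if l^ℓ_d is a negative literal on a variable of X, χ^{ℓ,d} = ⋁_{1≤j≤m} C_d(w_ℓ, v_j) if l^ℓ_d is a positive literal on a variable of Y, and χ^{ℓ,d} = ⋀_{1≤j≤m} ¬C_d(w_ℓ, v_j) if l^ℓ_d is a negative literal on a variable of Y. Then the following are equivalent: (1) there exists a truth assignment α : X → Bool of weight k such that for every truth assignment β : Y → Bool the assignment α ∪ β satisfies ψ; (2) 𝔄 ⊨ φ′. -/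

import Mathlib

/-- The weight of a truth assignment: the number of variables it maps to true. -/
def weight {X : Type} [Fintype X] (α : X → Bool) : ℕ :=
  (Finset.univ.filter fun x => α x = true).card

/-- The domain of the structure 𝔄: the variables `x₁,…,xₙ`, the variables `y₁,…,y_m`,
the terms `δ₁,…,δ_u`, and the extra element `⋆` (pairwise distinct). -/
abbrev Dom3 (n m u : ℕ) : Type := Fin n ⊕ (Fin m ⊕ (Fin u ⊕ Unit))

/-- The domain element corresponding to the variable `x_i`. -/
def emX {n m u : ℕ} (i : Fin n) : Dom3 n m u := Sum.inl i

/-- The domain element corresponding to the variable `y_j`. -/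
def emY {n m u : ℕ} (j : Fin m) : Dom3 n m u := Sum.inr (Sum.inl j)

/-- The domain element corresponding to the term `δ_ℓ`. -/
def emD {n m u : ℕ} (l : Fin u) : Dom3 n m u := Sum.inr (Sum.inr (Sum.inl l))

/-- The domain element `⋆`. -/
def emStar {n m u : ℕ} : Dom3 n m u := Sum.inr (Sum.inr (Sum.inr ()))

/-- The domain element corresponding to a variable of `X ∪ Y`. -/
def emVar {n m u : ℕ} (z : Fin n ⊕ Fin m) : Dom3 n m u := Sum.elim emX emY z

/-- The interpretation `D^𝔄 = {δ₁,…,δ_u}`. -/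
def relD {n m u : ℕ} (a : Dom3 n m u) : Prop := ∃ l : Fin u, a = emD l

/-- The interpretation `X̂^𝔄 = X`. -/
def relX {n m u : ℕ} (a : Dom3 n m u) : Prop := ∃ i : Fin n, a = emX i

/-- The interpretation `Ŷ^𝔄 = Y ∪ {⋆}`. -/
def relY {n m u : ℕ} (a : Dom3 n m u) : Prop := (∃ j : Fin m, a = emY j) ∨ a = emStar

/-- The interpretation `O^𝔄 = {(δ_ℓ, δ_ℓ′) : ℓ < ℓ′}`. -/
def relO {n m u : ℕ} (a b : Dom3 n m u) : Prop :=
  ∃ l l' : Fin u, l < l' ∧ a = emD l ∧ b = emD l'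

/-- The interpretation `C_d^𝔄 = {(δ_ℓ, z) : z is the variable occurring in the literal
l^ℓ_d}`, for the 3DNF formula with terms `δ_ℓ` given by the literal table `δ`. -/
def relC {n m u : ℕ} (δ : Fin u → Fin 3 → (Fin n ⊕ Fin m) × Bool) (d : Fin 3)
    (a z : Dom3 n m u) : Prop :=
  ∃ l : Fin u, a = emD l ∧ z = emVar (δ l d).1

/-- The subformula `χ^{ℓ,d}` of `χ_sat`, whose shape depends on the sign and the kind of
variable of the literal `l^ℓ_d`. -/
def chiSat {n m u k : ℕ} (δ : Fin u → Fin 3 → (Fin n ⊕ Fin m) × Bool)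
    (uu : Fin k → Dom3 n m u) (vv : Fin m → Dom3 n m u) (ww : Fin u → Dom3 n m u)
    (l : Fin u) (d : Fin 3) : Prop :=
  match δ l d with
  | (Sum.inl _, true) => ∃ j : Fin k, relC δ d (ww l) (uu j)
  | (Sum.inl _, false) => ∀ j : Fin k, ¬ relC δ d (ww l) (uu j)
  | (Sum.inr _, true) => ∃ j : Fin m, relC δ d (ww l) (vv j)
  | (Sum.inr _, false) => ∀ j : Fin m, ¬ relC δ d (ww l) (vv j)

/-!
A tuple of elements of `𝔄` encodes a truth assignment by listing the variables assigned true.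
Tuples satisfying `χ_U` list `k` distinct variables of `X`, so they encode exactly the assignments
of weight `k`; the element `⋆` pads the tuples satisfying `χ_V`, so these encode all assignments
of `Y`, whatever their weight. A tuple satisfying `χ_W` is a strictly increasing enumeration of the
`u` terms, hence must be `(δ₁, …, δ_u)`, and then `C_d(w_ℓ, z)` says that `z` is the variable of the
literal `l^ℓ_d`.
-/

open Function

section Encoding

variable {ι κ A : Type*}

/-- The tuple `t` encodes the truth assignment `α` of the variables `ι`, embedded into `A` by `e`:
the variables that `α` maps to true are those whose image under `e` occurs in `t`. Entries of `t`
outside the range of `e` are ignored, and an entry may be repeated. -/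
def Encodes (e : ι → A) (t : κ → A) (α : ι → Bool) : Prop :=
  ∀ x, α x = true ↔ e x ∈ Set.range t

theorem exists_encodes (e : ι → A) (t : κ → A) : ∃ α, Encodes e t α := by
  classical
  exact ⟨fun x => decide (e x ∈ Set.range t), fun _ => decide_eq_true_iff⟩

theorem encodes_comp_iff {e : ι → A} (he : Injective e) {a : κ → ι} {α : ι → Bool} :
    Encodes e (e ∘ a) α ↔ Encodes id a α := by
  simp only [Encodes, Set.mem_range, comp_apply, he.eq_iff, id]

theorem encodes_ite {e : ι → A} (he : Injective e) {s : A} (hs : s ∉ Set.range e)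
    (α : ι → Bool) : Encodes e (fun x => if α x then e x else s) α := by
  intro x
  constructor
  · intro hx
    exact ⟨x, if_pos hx⟩
  · rintro ⟨y, hy⟩
    dsimp only at hy
    split_ifs at hy with hαy
    · exact he hy ▸ hαy
    · exact absurd ⟨x, hy.symm⟩ hs

theorem weight_eq_iff_exists_encodes {X : Type} [Fintype X] {α : X → Bool} {k : ℕ} :
    weight α = k ↔ ∃ a : Fin k → X, Injective a ∧ Encodes id a α := by
  classical
  constructor
  · intro hα
    let a := (Finset.equivFinOfCardEq hα).symm
    have range_eq : Set.range (Subtype.val ∘ a) = {x | α x = true} := by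
      rw [a.surjective.range_comp]
      ext x
      simp
    exact ⟨Subtype.val ∘ a, Subtype.val_injective.comp a.injective,
      fun x => (Set.ext_iff.1 range_eq x).symm⟩
  · rintro ⟨a, ha, haα⟩
    have trueSet_eq : (Finset.univ.filter fun x => α x = true) = Finset.univ.image a := by
      ext x
      simpa using haα x
    rw [weight, trueSet_eq, Finset.card_image_of_injective _ ha, Finset.card_fin]

end Encoding

section Structure

variable {n m u k : ℕ}

theorem emX_injective : Injective (emX : Fin n → Dom3 n m u) :=
  Sum.inl_injective

theorem emY_injective : Injective (emY : Fin m → Dom3 n m u) :=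
  Sum.inr_injective.comp Sum.inl_injective

theorem emD_injective : Injective (emD : Fin u → Dom3 n m u) :=
  Sum.inr_injective.comp (Sum.inr_injective.comp Sum.inl_injective)

theorem emStar_notMem_range_emY : emStar ∉ Set.range (emY : Fin m → Dom3 n m u) := by
  rintro ⟨_, h⟩
  cases h

theorem relO_emD_iff {l l' : Fin u} : relO (emD l : Dom3 n m u) (emD l') ↔ l < l' := by
  simp only [relO, emD_injective.eq_iff, ↓existsAndEq, and_true]

theorem relC_emD_iff {δ : Fin u → Fin 3 → (Fin n ⊕ Fin m) × Bool} {d : Fin 3} {l : Fin u}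
    {z : Dom3 n m u} : relC δ d (emD l) z ↔ z = emVar (δ l d).1 := by
  simp only [relC, emD_injective.eq_iff, ↓existsAndEq, true_and]

/-- The subformula `χ_U` of `φ′`: the `u_i` are pairwise distinct variables of `X`. -/
def chiU (uu : Fin k → Dom3 n m u) : Prop :=
  (∀ i, relX (uu i)) ∧ ∀ i i', i < i' → uu i ≠ uu i'

/-- The subformula `χ_V` of `φ′`: each `v_j` is a variable of `Y` or the padding element `⋆`. -/
def chiV (vv : Fin m → Dom3 n m u) : Prop :=
  ∀ j, relY (vv j)

/-- The subformula `χ_W` of `φ′`: the `w_ℓ` are terms, listed in increasing order. -/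
def chiW (ww : Fin u → Dom3 n m u) : Prop :=
  (∀ l, relD (ww l)) ∧ ∀ l l', l < l' → relO (ww l) (ww l')

theorem chiU_iff_exists_injective {uu : Fin k → Dom3 n m u} :
    chiU uu ↔ ∃ a : Fin k → Fin n, Injective a ∧ uu = emX ∘ a := by
  constructor
  · rintro ⟨hX, hne⟩
    choose a ha using hX
    obtain rfl : uu = emX ∘ a := funext ha
    exact ⟨a, (Injective.of_lt_imp_ne hne).of_comp, rfl⟩
  · rintro ⟨a, ha, rfl⟩
    exact ⟨fun i => ⟨a i, rfl⟩, fun _ _ hlt => (emX_injective.comp ha).ne hlt.ne⟩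

theorem weight_eq_iff_exists_chiU {α : Fin n → Bool} :
    weight α = k ↔ ∃ uu : Fin k → Dom3 n m u, chiU uu ∧ Encodes emX uu α := by
  rw [weight_eq_iff_exists_encodes]
  constructor
  · rintro ⟨a, ha, haα⟩
    exact ⟨emX ∘ a, chiU_iff_exists_injective.2 ⟨a, ha, rfl⟩,
      (encodes_comp_iff emX_injective).2 haα⟩
  · rintro ⟨uu, hU, huα⟩
    obtain ⟨a, ha, rfl⟩ := chiU_iff_exists_injective.1 hU
    exact ⟨a, ha, (encodes_comp_iff emX_injective).1 huα⟩

theorem exists_chiV_encodes (β : Fin m → Bool) :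
    ∃ vv : Fin m → Dom3 n m u, chiV vv ∧ Encodes emY vv β := by
  refine ⟨_, fun j => ?_, encodes_ite emY_injective emStar_notMem_range_emY β⟩
  split_ifs
  · exact Or.inl ⟨j, rfl⟩
  · exact Or.inr rfl

theorem chiW_iff_eq_emD {ww : Fin u → Dom3 n m u} : chiW ww ↔ ww = emD := by
  constructor
  · rintro ⟨hD, hO⟩
    choose f hf using hD
    obtain rfl : ww = emD ∘ f := funext hf
    have hmono : StrictMono f := fun l l' hlt => relO_emD_iff.1 (hO l l' hlt)
    have hid : f = id := hmono.le_id.antisymm hmono.id_le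
    rw [hid, comp_id]
  · rintro rfl
    exact ⟨fun l => ⟨l, rfl⟩, fun _ _ => relO_emD_iff.2⟩

theorem chiSat_emD_iff {δ : Fin u → Fin 3 → (Fin n ⊕ Fin m) × Bool}
    {uu : Fin k → Dom3 n m u} {vv : Fin m → Dom3 n m u} {α : Fin n → Bool} {β : Fin m → Bool}
    (hα : Encodes emX uu α) (hβ : Encodes emY vv β) {l : Fin u} {d : Fin 3} :
    chiSat δ uu vv emD l d ↔ Sum.elim α β (δ l d).1 = (δ l d).2 := by
  simp only [chiSat, relC_emD_iff]
  rcases δ l d with ⟨x | y, _ | _⟩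
  · rw [Sum.elim_inl, ← Bool.not_eq_true, hα x, Set.mem_range, not_exists]
    rfl
  · exact (hα x).symm
  · rw [Sum.elim_inr, ← Bool.not_eq_true, hβ y, Set.mem_range, not_exists]
    rfl
  · exact (hβ y).symm

end Structure

/-- Correctness of the reduction from ∃ᵏ∀*-WSat(3DNF) to first-order model checking:
the 3DNF instance `∃X.∀Y.ψ` (with `ψ` given by the literal table `δ`) has a weight-`k`
existential assignment making `∀Y.ψ` true iff the structure `𝔄` satisfies the sentence
`φ′ = ∃u₁…u_k ∀v₁…v_m ∀w₁…w_u [χ_U ∧ ((χ_V ∧ χ_W) → χ_sat)]`. -/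
theorem statement3 (n m u k : ℕ) (δ : Fin u → Fin 3 → (Fin n ⊕ Fin m) × Bool) :
    ((∃ α : Fin n → Bool, weight α = k ∧
        ∀ β : Fin m → Bool, ∃ l : Fin u, ∀ d : Fin 3,
          Sum.elim α β (δ l d).1 = (δ l d).2) ↔
      (∃ uu : Fin k → Dom3 n m u,
        ∀ (vv : Fin m → Dom3 n m u) (ww : Fin u → Dom3 n m u),
          ((∀ i : Fin k, relX (uu i)) ∧ (∀ i i' : Fin k, i < i' → uu i ≠ uu i')) ∧
          (((∀ j : Fin m, relY (vv j)) ∧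
              ((∀ l : Fin u, relD (ww l)) ∧
                (∀ l l' : Fin u, l < l' → relO (ww l) (ww l')))) →
            ∃ l : Fin u, ∀ d : Fin 3, chiSat δ uu vv ww l d))) := by
  constructor
  · rintro ⟨α, hα, hsat⟩
    obtain ⟨uu, hU, huα⟩ := weight_eq_iff_exists_chiU.1 hα
    refine ⟨uu, fun vv ww => ⟨hU, fun ⟨_, hW⟩ => ?_⟩⟩
    obtain rfl := chiW_iff_eq_emD.1 hW
    obtain ⟨β, hvβ⟩ := exists_encodes emY vv
    obtain ⟨l, hl⟩ := hsat β
    exact ⟨l, fun d => (chiSat_emD_iff huα hvβ).2 (hl d)⟩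
  · rintro ⟨uu, h⟩
    have hU : chiU uu := (h (fun _ => emStar) emD).1
    obtain ⟨α, huα⟩ := exists_encodes emX uu
    refine ⟨α, weight_eq_iff_exists_chiU.2 ⟨uu, hU, huα⟩, fun β => ?_⟩
    obtain ⟨vv, hV, hvβ⟩ := exists_chiV_encodes β
    obtain ⟨l, hl⟩ := (h vv emD).2 ⟨hV, chiW_iff_eq_emD.2 rfl⟩
    exact ⟨l, fun d => (chiSat_emD_iff huα hvβ).1 (hl d)⟩
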